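/- arXiv:2605.17801 — 4 statements merged into one kernel-verified Lean document; each statement's English description precedes it below -/
import Mathlib

section
/- Let f be a continuously differentiable function on a compact interval [a,b] with a < b. For ε > 0, let N_ε(f) denote the minimal natural number N for which there exist points a = x_0 < x_1 < ... < x_N = b and real constants q_1, ..., q_N such that the sum over k = 1, ..., N of ∫_{x_{k-1}}^{x_k} |f(x) - q_k| dx is at most ε. Then ε · N_ε(f) converges to V(f) as ε tends to 0 from the right. -/
open MeasureTheory

/-!
On an interval where `f'` is nearly constant, the best constant approximation of `f` is about
`f (midpoint)` and its `L¹` error is about `|f'| (v - u)² / 4 ≈ (∫_u^v √|f'|)² / 4`. So the errors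
`e₁, …, eₙ` of a good step function with `n` pieces satisfy `∫_a^b √|f'| ≈ 2 ∑ √eₖ`, which by
Cauchy–Schwarz is at most `2 √(n ∑ eₖ)`; equality is approached by the partitions that give every
piece the same share of `∫_a^b √|f'|`.
-/

namespace VComplexity

open Set Filter Topology

lemma tendsto_mul_sInf_setOf {P : ℕ → ℝ → Prop} {V : ℝ} (hV : 0 ≤ V) (hmono : ∀ n, Monotone (P n))
    (hupper : ∀ c > V, ∀ᶠ n : ℕ in atTop, P n (c / n))
    (hlower : ∀ c < V, ∀ᶠ ε in 𝓝[>] 0, ∀ n, P n ε → c ≤ ε * n) :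
    Tendsto (fun ε : ℝ => ε * (sInf {n | P n ε} : ℕ)) (𝓝[>] 0) (𝓝 V) := by
  have hceil : ∀ c > V, ∀ᶠ ε in 𝓝[>] (0 : ℝ), P ⌈c / ε⌉₊ ε := by
    intro c hc
    have hc0 : 0 < c := hV.trans_lt hc
    have hlim : Tendsto (fun ε : ℝ => ⌈c / ε⌉₊) (𝓝[>] 0) atTop := by
      simp only [div_eq_mul_inv]
      exact tendsto_nat_ceil_atTop.comp (tendsto_inv_nhdsGT_zero.const_mul_atTop hc0)
    filter_upwards [hlim.eventually (hupper c hc), self_mem_nhdsWithin] with ε hP (hε : 0 < ε)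
    refine hmono _ ?_ hP
    have hn : c / ε ≤ ⌈c / ε⌉₊ := Nat.le_ceil _
    exact (div_le_comm₀ hε ((div_pos hc0 hε).trans_le hn)).1 hn
  refine tendsto_order.2 ⟨fun y hy => ?_, fun y hy => ?_⟩
  · obtain ⟨c, hyc, hcV⟩ := exists_between hy
    filter_upwards [hlower c hcV, hceil (V + 1) (lt_add_one V)] with ε hlow hP
    exact hyc.trans_le (hlow _ (Nat.sInf_mem (s := {n | P n ε}) ⟨_, hP⟩))
  · obtain ⟨c, hVc, hcy⟩ := exists_between hy
    filter_upwards [hceil c hVc, Ioo_mem_nhdsGT (sub_pos.2 hcy)] with ε hP ⟨hε, hεy⟩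
    have hc0 : 0 < c := hV.trans_lt hVc
    calc ε * (sInf {n | P n ε} : ℕ) ≤ ε * ⌈c / ε⌉₊ := by
          gcongr
          exact Nat.sInf_le hP
      _ ≤ ε * (c / ε + 1) := by
          gcongr
          exact (Nat.ceil_lt_add_one (by positivity)).le
      _ = c + ε := by field_simp
      _ < y := by linarith

lemma sum_sqrt_le_sqrt_card_mul_sum {ι : Type*} (s : Finset ι) {e : ι → ℝ}
    (he : ∀ i ∈ s, 0 ≤ e i) : ∑ i ∈ s, √(e i) ≤ √(s.card * ∑ i ∈ s, e i) := by
  refine Real.le_sqrt_of_sq_le (sq_sum_le_card_mul_sum_sq.trans_eq ?_)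
  rw [Finset.sum_congr rfl fun i hi => Real.sq_sqrt (he i hi)]

lemma mem_Icc_of_forall_lt_succ {x : ℕ → ℝ} {n k : ℕ} (hx : ∀ k < n, x k < x (k + 1))
    (hk : k ≤ n) : x k ∈ Icc (x 0) (x n) := by
  have hmono : MonotoneOn x (Iic n) := (strictMonoOn_Iic_of_lt_succ hx).monotoneOn
  exact ⟨hmono (mem_Iic.2 n.zero_le) hk k.zero_le, hmono hk (mem_Iic.2 le_rfl) hk⟩

lemma Icc_subset_Icc_of_forall_lt_succ {x : ℕ → ℝ} {n k : ℕ} (hx : ∀ k < n, x k < x (k + 1))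
    (hk : k < n) : Icc (x k) (x (k + 1)) ⊆ Icc (x 0) (x n) :=
  Icc_subset_Icc (mem_Icc_of_forall_lt_succ hx hk.le).1 (mem_Icc_of_forall_lt_succ hx hk).2

lemma exists_equipartition_of_strictMonoOn {F : ℝ → ℝ} {a b : ℝ} (hab : a < b)
    (hF : ContinuousOn F (Icc a b)) (hmono : StrictMonoOn F (Icc a b)) {n : ℕ} (hn : n ≠ 0) :
    ∃ x : ℕ → ℝ, x 0 = a ∧ x n = b ∧ (∀ k < n, x k < x (k + 1)) ∧
      ∀ k < n, F (x (k + 1)) - F (x k) = (F b - F a) / n := by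
  have ha : a ∈ Icc a b := left_mem_Icc.2 hab.le
  have hb : b ∈ Icc a b := right_mem_Icc.2 hab.le
  have hn0 : (0 : ℝ) < n := by positivity
  set h := (F b - F a) / n
  have hh : 0 < h := div_pos (sub_pos.2 (hmono ha hb hab)) hn0
  have hnh : n * h = F b - F a := mul_div_cancel₀ _ hn0.ne'
  have hlevel : ∀ k : ℕ, k ≤ n → ∃ x ∈ Icc a b, F x = F a + k * h := by
    intro k hk
    refine hF.surjOn_Icc ha hb ⟨le_add_of_nonneg_right (by positivity), ?_⟩
    have : k * h ≤ n * h := by gcongr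
    linarith
  choose! x hx hFx using hlevel
  have hstep : ∀ k < n, F (x (k + 1)) - F (x k) = h := by
    intro k hk
    rw [hFx k hk.le, hFx (k + 1) hk]
    push_cast
    ring
  refine ⟨x, ?_, ?_, fun k hk => ?_, hstep⟩
  · exact hmono.injOn (hx 0 n.zero_le) ha (by simp [hFx 0 n.zero_le])
  · exact hmono.injOn (hx n le_rfl) hb (by rw [hFx n le_rfl, hnh]; ring)
  · exact (hmono.lt_iff_lt (hx k hk.le) (hx (k + 1) hk)).1 (by linarith [hstep k hk])

lemma exists_equipartition_integral {g : ℝ → ℝ} {a b : ℝ} (hab : a < b)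
    (hg : ContinuousOn g (Icc a b)) (hpos : ∀ t ∈ Ioo a b, 0 < g t) {n : ℕ} (hn : n ≠ 0) :
    ∃ x : ℕ → ℝ, x 0 = a ∧ x n = b ∧ (∀ k < n, x k < x (k + 1)) ∧
      ∀ k < n, ∫ t in x k..x (k + 1), g t = (∫ t in a..b, g t) / n := by
  have ha : a ∈ Icc a b := left_mem_Icc.2 hab.le
  have hint : ∀ u ∈ Icc a b, ∀ v ∈ Icc a b, IntervalIntegrable g volume u v := fun u hu v hv =>
    (hg.mono (uIcc_subset_Icc hu hv)).intervalIntegrable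
  have hdiff : ∀ u ∈ Icc a b, ∀ v ∈ Icc a b,
      (∫ t in a..v, g t) - ∫ t in a..u, g t = ∫ t in u..v, g t := fun u hu v hv =>
    intervalIntegral.integral_interval_sub_left (hint a ha v hv) (hint a ha u hu)
  have hF : ContinuousOn (fun x => ∫ t in a..x, g t) (Icc a b) := by
    rw [← uIcc_of_le hab.le]
    exact intervalIntegral.continuousOn_primitive_interval'
      (hg.intervalIntegrable_of_Icc hab.le) left_mem_uIcc
  have hmono : StrictMonoOn (fun x => ∫ t in a..x, g t) (Icc a b) := by
    intro u hu v hv huv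
    rw [← sub_pos, hdiff u hu v hv]
    exact intervalIntegral.intervalIntegral_pos_of_pos_on (hint u hu v hv)
      (fun t ht => hpos t ⟨hu.1.trans_lt ht.1, ht.2.trans_le hv.2⟩) huv
  obtain ⟨x, hx0, hxn, hx, hstep⟩ := exists_equipartition_of_strictMonoOn hab hF hmono hn
  have hmem : ∀ k ≤ n, x k ∈ Icc a b := fun k hk =>
    hx0 ▸ hxn ▸ mem_Icc_of_forall_lt_succ hx hk
  refine ⟨x, hx0, hxn, hx, fun k hk => ?_⟩
  rw [← hdiff _ (hmem k hk.le) _ (hmem (k + 1) hk), hstep k hk, intervalIntegral.integral_same,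
    sub_zero]

section ConstantApproximation

lemma integral_abs_sub_midpoint {u v : ℝ} (huv : u ≤ v) :
    ∫ t in u..v, |t - (u + v) / 2| = (v - u) ^ 2 / 4 := by
  set c := (u + v) / 2 with hc
  have huc : u ≤ c := by linarith
  have hcv : c ≤ v := by linarith
  have hint : ∀ p r : ℝ, IntervalIntegrable (fun t => |t - c|) volume p r := fun p r =>
    (by fun_prop : Continuous fun t => |t - c|).intervalIntegrable p r
  have hleft : ∫ t in u..c, |t - c| = ∫ t in u..c, (c - t) :=
    intervalIntegral.integral_congr fun t ht => by
      rw [uIcc_of_le huc] at ht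
      simp only [abs_of_nonpos (sub_nonpos.2 ht.2), neg_sub]
  have hright : ∫ t in c..v, |t - c| = ∫ t in c..v, (t - c) :=
    intervalIntegral.integral_congr fun t ht => by
      rw [uIcc_of_le hcv] at ht
      simp only [abs_of_nonneg (sub_nonneg.2 ht.1)]
  rw [← intervalIntegral.integral_add_adjacent_intervals (hint u c) (hint c v), hleft, hright]
  rw [intervalIntegral.integral_comp_sub_left (fun t => t),
    intervalIntegral.integral_comp_sub_right (fun t => t), integral_id, integral_id, hc]
  ring

variable {E : Type*} [NormedAddCommGroup E] {f : ℝ → E} {u v : ℝ}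

/-- Averaging `‖f - q‖` with its reflection in the midpoint eliminates `q`:
`‖f t - q‖ + ‖f (u + v - t) - q‖ ≥ ‖f t - f (u + v - t)‖`. -/
lemma mul_sq_div_four_le_integral_norm_sub (huv : u ≤ v) (hf : IntervalIntegrable f volume u v)
    {m : ℝ} (hm : ∀ s ∈ Icc u v, ∀ t ∈ Icc u v, m * |t - s| ≤ ‖f t - f s‖) (q : E) :
    m * (v - u) ^ 2 / 4 ≤ ∫ t in u..v, ‖f t - q‖ := by
  have hint : IntervalIntegrable (fun t => ‖f t - q‖) volume u v :=
    (hf.sub intervalIntegrable_const).norm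
  have hint' : IntervalIntegrable (fun t => ‖f (u + v - t) - q‖) volume u v := by
    simpa only [add_sub_cancel_left, add_sub_cancel_right] using (hint.comp_sub_left (u + v)).symm
  have hreflect : ∫ t in u..v, ‖f (u + v - t) - q‖ = ∫ t in u..v, ‖f t - q‖ := by
    rw [intervalIntegral.integral_comp_sub_left (fun t => ‖f t - q‖), add_sub_cancel_right,
      add_sub_cancel_left]
  have hpointwise : ∀ t ∈ Icc u v,
      2 * m * |t - (u + v) / 2| ≤ ‖f t - q‖ + ‖f (u + v - t) - q‖ := by
    intro t ht
    have hdist : |t - (u + v - t)| = 2 * |t - (u + v) / 2| := by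
      rw [← abs_two, ← abs_mul, abs_two]
      ring_nf
    calc 2 * m * |t - (u + v) / 2| = m * |t - (u + v - t)| := by rw [hdist]; ring
      _ ≤ ‖f t - f (u + v - t)‖ := hm _ ⟨by linarith [ht.2], by linarith [ht.1]⟩ t ht
      _ ≤ ‖f t - q‖ + ‖f (u + v - t) - q‖ := by
          simpa only [dist_eq_norm] using dist_triangle_right (f t) (f (u + v - t)) q
  have hle := intervalIntegral.integral_mono_on huv
    (Continuous.intervalIntegrable (by fun_prop) u v) (hint.add hint') hpointwise
  rw [intervalIntegral.integral_const_mul, integral_abs_sub_midpoint huv,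
    intervalIntegral.integral_add hint hint', hreflect] at hle
  linarith

lemma integral_norm_sub_midpoint_le (huv : u ≤ v) (hf : IntervalIntegrable f volume u v) {M : ℝ}
    (hM : ∀ t ∈ Icc u v, ‖f t - f ((u + v) / 2)‖ ≤ M * |t - (u + v) / 2|) :
    ∫ t in u..v, ‖f t - f ((u + v) / 2)‖ ≤ M * (v - u) ^ 2 / 4 := by
  calc ∫ t in u..v, ‖f t - f ((u + v) / 2)‖ ≤ ∫ t in u..v, M * |t - (u + v) / 2| :=
        intervalIntegral.integral_mono_on huv (hf.sub intervalIntegrable_const).norm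
          (Continuous.intervalIntegrable (by fun_prop) u v) hM
    _ = M * (v - u) ^ 2 / 4 := by
        rw [intervalIntegral.integral_const_mul, integral_abs_sub_midpoint huv, mul_div_assoc]

end ConstantApproximation

section DerivativeBounds

variable {f f' : ℝ → ℝ} {u v c : ℝ}

lemma mul_abs_sub_le_abs_image_sub_of_le_abs_deriv {s : Set ℝ} {m x y : ℝ} (hs : Convex ℝ s)
    (hd : ∀ z ∈ s, HasDerivWithinAt f (f' z) s z) (hm : ∀ z ∈ s, m ≤ |f' z|) (hx : x ∈ s)
    (hy : y ∈ s) : m * |y - x| ≤ |f y - f x| := by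
  wlog hxy : x ≤ y generalizing x y
  · rw [abs_sub_comm y, abs_sub_comm (f y)]
    exact this hy hx (le_of_not_ge hxy)
  obtain rfl | hlt := hxy.eq_or_lt
  · simp only [sub_self, abs_zero, mul_zero, le_refl]
  have hsub : Icc x y ⊆ s := hs.ordConnected.out hx hy
  obtain ⟨z, hz, hslope⟩ := exists_hasDerivAt_eq_slope f f' hlt
    (fun z hz => ((hd z (hsub hz)).mono hsub).continuousWithinAt)
    (fun z hz => ((hd z (hsub (Ioo_subset_Icc_self hz))).mono hsub).hasDerivAt
      (Icc_mem_nhds hz.1 hz.2))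
  have hyx : 0 < |y - x| := abs_pos.2 (sub_pos.2 hlt).ne'
  rw [← le_div_iff₀ hyx, ← abs_div, ← hslope]
  exact hm z (hsub (Ioo_subset_Icc_self hz))

lemma mul_sub_le_two_mul_sqrt_integral_abs_sub (huv : u ≤ v)
    (hd : ∀ x ∈ Icc u v, HasDerivWithinAt f (f' x) (Icc u v) x)
    (hc : ∀ x ∈ Icc u v, c ≤ √|f' x|) (q : ℝ) :
    c * (v - u) ≤ 2 * √(∫ t in u..v, |f t - q|) := by
  obtain hneg | hc0 := lt_or_ge c 0
  · exact (mul_nonpos_of_nonpos_of_nonneg hneg.le (sub_nonneg.2 huv)).trans (by positivity)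
  have hf : ContinuousOn f (Icc u v) := fun x hx => (hd x hx).continuousWithinAt
  have hsq : ∀ x ∈ Icc u v, c ^ 2 ≤ |f' x| := fun x hx =>
    (Real.le_sqrt hc0 (abs_nonneg _)).1 (hc x hx)
  have herr : c ^ 2 * (v - u) ^ 2 / 4 ≤ ∫ t in u..v, |f t - q| :=
    mul_sq_div_four_le_integral_norm_sub huv (hf.intervalIntegrable_of_Icc huv)
      (fun s hs t ht =>
        mul_abs_sub_le_abs_image_sub_of_le_abs_deriv (convex_Icc u v) hd hsq hs ht) q
  have : c * (v - u) / 2 ≤ √(∫ t in u..v, |f t - q|) := Real.le_sqrt_of_sq_le (by linarith)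
  linarith

lemma mul_sub_le_two_mul_sqrt_integral_abs_sub_of_subinterval {s r : ℝ} (hus : u ≤ s)
    (hsr : s ≤ r) (hrv : r ≤ v) (hd : ∀ x ∈ Icc u v, HasDerivWithinAt f (f' x) (Icc u v) x)
    (hc : ∀ x ∈ Icc s r, c ≤ √|f' x|) (q : ℝ) :
    c * (r - s) ≤ 2 * √(∫ t in u..v, |f t - q|) := by
  have hsub : Icc s r ⊆ Icc u v := Icc_subset_Icc hus hrv
  have hf : ContinuousOn (fun t => |f t - q|) (Icc u v) := fun x hx =>
    ((hd x hx).continuousWithinAt.sub continuousWithinAt_const).abs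
  have hle : ∫ t in s..r, |f t - q| ≤ ∫ t in u..v, |f t - q| :=
    intervalIntegral.integral_mono_interval hus hsr hrv
      (Eventually.of_forall fun t => abs_nonneg (f t - q))
      (hf.intervalIntegrable_of_Icc (hus.trans (hsr.trans hrv)))
  calc c * (r - s) ≤ 2 * √(∫ t in s..r, |f t - q|) :=
        mul_sub_le_two_mul_sqrt_integral_abs_sub hsr (fun x hx => (hd x (hsub hx)).mono hsub) hc q
    _ ≤ 2 * √(∫ t in u..v, |f t - q|) := by gcongr

lemma integral_abs_sub_midpoint_le_of_sqrt_abs_deriv_le (huv : u ≤ v)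
    (hd : ∀ x ∈ Icc u v, HasDerivWithinAt f (f' x) (Icc u v) x)
    (hc : ∀ x ∈ Icc u v, √|f' x| ≤ c) :
    ∫ t in u..v, |f t - f ((u + v) / 2)| ≤ (c * (v - u)) ^ 2 / 4 := by
  have hf : ContinuousOn f (Icc u v) := fun x hx => (hd x hx).continuousWithinAt
  have hmid : (u + v) / 2 ∈ Icc u v := ⟨by linarith, by linarith⟩
  rw [mul_pow]
  exact integral_norm_sub_midpoint_le huv (hf.intervalIntegrable_of_Icc huv) fun t ht =>
    (convex_Icc u v).norm_image_sub_le_of_norm_hasDerivWithin_le hd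
      (fun x hx => (Real.sqrt_le_iff.1 (hc x hx)).2) hmid ht

end DerivativeBounds

section Oscillation

variable {f f' : ℝ → ℝ} {u v η δ : ℝ}

/-- The error bound forbids pieces longer than `δ`, except where `√|f'| ≤ 2η` throughout. -/
lemma integral_sqrt_abs_deriv_le_of_integral_abs_sub_lt (huv : u ≤ v)
    (hd : ∀ x ∈ Icc u v, HasDerivWithinAt f (f' x) (Icc u v) x)
    (hcont : ContinuousOn f' (Icc u v)) (hη : 0 < η) (hδ : 0 < δ)
    (hosc : ∀ x ∈ Icc u v, ∀ y ∈ Icc u v, dist x y ≤ δ → dist √|f' x| √|f' y| ≤ η) {q : ℝ}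
    (herr : ∫ t in u..v, |f t - q| < (η * δ / 2) ^ 2) :
    ∫ t in u..v, √|f' t| ≤ 2 * η * (v - u) + 2 * √(∫ t in u..v, |f t - q|) := by
  set e := ∫ t in u..v, |f t - q|
  obtain ⟨y, hy, hmax⟩ := isCompact_Icc.exists_isMaxOn (nonempty_Icc.2 huv) hcont.abs.sqrt
  have hint_le : ∫ t in u..v, √|f' t| ≤ √|f' y| * (v - u) := by
    calc ∫ t in u..v, √|f' t| ≤ ∫ _ in u..v, √|f' y| :=
          intervalIntegral.integral_mono_on huv (hcont.abs.sqrt.intervalIntegrable_of_Icc huv)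
            intervalIntegrable_const fun t ht => hmax ht
      _ = √|f' y| * (v - u) := by
          rw [intervalIntegral.integral_const, smul_eq_mul, mul_comm]
  have hwindow : ∀ s r, u ≤ s → s ≤ r → r ≤ v → r - s ≤ δ → y ∈ Icc s r →
      (√|f' y| - η) * (r - s) ≤ 2 * √e := by
    intro s r hus hsr hrv hlen hysr
    refine mul_sub_le_two_mul_sqrt_integral_abs_sub_of_subinterval hus hsr hrv hd
      (fun x hx => ?_) q
    have hclose := hosc y hy x (Icc_subset_Icc hus hrv hx)
      ((Real.dist_le_of_mem_Icc hysr hx).trans hlen)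
    linarith [le_of_abs_le hclose]
  obtain hshort | hlong := le_or_gt (v - u) δ
  · have := hwindow u v le_rfl huv le_rfl hshort hy
    linarith [mul_nonneg hη.le (sub_nonneg.2 huv)]
  · have hpeak : (√|f' y| - η) * δ ≤ 2 * √e := by
      obtain hyv | hyv := le_total y (v - δ)
      · simpa using hwindow y (y + δ) hy.1 (by linarith) (by linarith) (by linarith)
          ⟨le_rfl, by linarith⟩
      · simpa using hwindow (v - δ) v (by linarith) (by linarith) le_rfl (by linarith)
          ⟨hyv, hy.2⟩
    have hsqrt : √e < η * δ / 2 := (Real.sqrt_lt' (by positivity)).2 herr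
    have hsmall : √|f' y| ≤ 2 * η := by
      have : (√|f' y| - η) * δ ≤ η * δ := by linarith
      linarith [le_of_mul_le_mul_right this hδ]
    calc ∫ t in u..v, √|f' t| ≤ 2 * η * (v - u) :=
          hint_le.trans (mul_le_mul_of_nonneg_right hsmall (sub_nonneg.2 huv))
      _ ≤ 2 * η * (v - u) + 2 * √e := le_add_of_nonneg_right (by positivity)

lemma integral_abs_sub_midpoint_le_sq_integral (huv : u ≤ v)
    (hd : ∀ x ∈ Icc u v, HasDerivWithinAt f (f' x) (Icc u v) x)
    (hcont : ContinuousOn f' (Icc u v))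
    (hosc : ∀ x ∈ Icc u v, ∀ y ∈ Icc u v, dist √|f' x| √|f' y| ≤ η) :
    ∫ t in u..v, |f t - f ((u + v) / 2)| ≤ (∫ t in u..v, (√|f' t| + η)) ^ 2 / 4 := by
  obtain ⟨y, hy, hmax⟩ := isCompact_Icc.exists_isMaxOn (nonempty_Icc.2 huv) hcont.abs.sqrt
  have hle : √|f' y| * (v - u) ≤ ∫ t in u..v, (√|f' t| + η) := by
    calc √|f' y| * (v - u) = ∫ _ in u..v, √|f' y| := by
          rw [intervalIntegral.integral_const, smul_eq_mul, mul_comm]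
      _ ≤ ∫ t in u..v, (√|f' t| + η) :=
          intervalIntegral.integral_mono_on huv intervalIntegrable_const
            ((hcont.abs.sqrt.add continuousOn_const).intervalIntegrable_of_Icc huv)
            fun t ht => by linarith [le_of_abs_le (hosc y hy t ht)]
  have hnonneg : 0 ≤ √|f' y| * (v - u) := mul_nonneg (Real.sqrt_nonneg _) (sub_nonneg.2 huv)
  exact (integral_abs_sub_midpoint_le_of_sqrt_abs_deriv_le huv hd fun x hx => hmax hx).trans
    (div_le_div_of_nonneg_right (pow_le_pow_left₀ hnonneg hle 2) (by norm_num))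

end Oscillation

/-- `HasStepApprox f a b n ε`: some step function on `[a, b]` with exactly `n` pieces is within
`L¹` distance `ε` of `f`. The breakpoints are `x 0, …, x n` and the value on the `k`-th piece
`[x (k - 1), x k]` is `q k`; the remaining terms of the two sequences are irrelevant. -/
def HasStepApprox (f : ℝ → ℝ) (a b : ℝ) (n : ℕ) (ε : ℝ) : Prop :=
  ∃ (x : ℕ → ℝ) (q : ℕ → ℝ),
    x 0 = a ∧ x n = b ∧ (∀ k < n, x k < x (k + 1)) ∧
    (∑ k ∈ Finset.range n, ∫ t in (x k)..(x (k + 1)), |f t - q (k + 1)|) ≤ ε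

lemma monotone_hasStepApprox (f : ℝ → ℝ) (a b : ℝ) (n : ℕ) : Monotone (HasStepApprox f a b n) :=
  fun _ _ hle ⟨x, q, hx0, hxn, hx, herr⟩ => ⟨x, q, hx0, hxn, hx, herr.trans hle⟩

section StepApprox

variable {f f' : ℝ → ℝ} {a b : ℝ}

lemma exists_dist_sqrt_abs_le_of_continuousOn (hcont : ContinuousOn f' (Icc a b)) {η : ℝ}
    (hη : 0 < η) :
    ∃ δ > 0, ∀ x ∈ Icc a b, ∀ y ∈ Icc a b, dist x y ≤ δ → dist √|f' x| √|f' y| ≤ η :=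
  Metric.uniformContinuousOn_iff_le.1
    (isCompact_Icc.uniformContinuousOn_of_continuous hcont.abs.sqrt) η hη

lemma eventually_integral_sqrt_abs_deriv_le
    (hd : ∀ x ∈ Icc a b, HasDerivWithinAt f (f' x) (Icc a b) x)
    (hcont : ContinuousOn f' (Icc a b)) {η : ℝ} (hη : 0 < η) :
    ∀ᶠ ε in 𝓝[>] (0 : ℝ), ∀ n, HasStepApprox f a b n ε →
      ∫ t in a..b, √|f' t| ≤ 2 * η * (b - a) + 2 * √(ε * n) := by
  obtain ⟨δ, hδ, hosc⟩ := exists_dist_sqrt_abs_le_of_continuousOn hcont hη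
  filter_upwards [Ioo_mem_nhdsGT (show 0 < (η * δ / 2) ^ 2 by positivity)]
  rintro ε ⟨-, hε⟩ n ⟨x, q, rfl, rfl, hx, herr⟩
  set e : ℕ → ℝ := fun k => ∫ t in (x k)..(x (k + 1)), |f t - q (k + 1)|
  have he0 : ∀ k ∈ Finset.range n, 0 ≤ e k := fun k hk =>
    intervalIntegral.integral_nonneg (hx k (Finset.mem_range.1 hk)).le fun _ _ => abs_nonneg _
  have hpiece : ∀ k ∈ Finset.range n,
      ∫ t in (x k)..(x (k + 1)), √|f' t| ≤ 2 * η * (x (k + 1) - x k) + 2 * √(e k) := by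
    intro k hk
    have hkn := Finset.mem_range.1 hk
    have hsub := Icc_subset_Icc_of_forall_lt_succ hx hkn
    exact integral_sqrt_abs_deriv_le_of_integral_abs_sub_lt (hx k hkn).le
      (fun y hy => (hd y (hsub hy)).mono hsub) (hcont.mono hsub) hη hδ
      (fun y hy z hz => hosc y (hsub hy) z (hsub hz))
      (((Finset.single_le_sum he0 hk).trans herr).trans_lt hε)
  calc ∫ t in (x 0)..(x n), √|f' t|
      = ∑ k ∈ Finset.range n, ∫ t in (x k)..(x (k + 1)), √|f' t| :=
        (intervalIntegral.sum_integral_adjacent_intervals fun k hk =>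
          (hcont.abs.sqrt.mono (Icc_subset_Icc_of_forall_lt_succ hx hk)).intervalIntegrable_of_Icc
            (hx k hk).le).symm
    _ ≤ ∑ k ∈ Finset.range n, (2 * η * (x (k + 1) - x k) + 2 * √(e k)) := Finset.sum_le_sum hpiece
    _ = 2 * η * (x n - x 0) + 2 * ∑ k ∈ Finset.range n, √(e k) := by
        rw [Finset.sum_add_distrib, ← Finset.mul_sum, ← Finset.mul_sum, Finset.sum_range_sub]
    _ ≤ 2 * η * (x n - x 0) + 2 * √(n * ∑ k ∈ Finset.range n, e k) := by
        gcongr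
        simpa only [Finset.card_range] using sum_sqrt_le_sqrt_card_mul_sum (Finset.range n) he0
    _ ≤ 2 * η * (x n - x 0) + 2 * √(ε * n) := by
        rw [mul_comm ε]
        gcongr

lemma eventually_hasStepApprox (hab : a < b)
    (hd : ∀ x ∈ Icc a b, HasDerivWithinAt f (f' x) (Icc a b) x)
    (hcont : ContinuousOn f' (Icc a b)) {η : ℝ} (hη : 0 < η) :
    ∀ᶠ n : ℕ in atTop, HasStepApprox f a b n ((∫ t in a..b, (√|f' t| + η)) ^ 2 / 4 / n) := by
  obtain ⟨δ, hδ, hosc⟩ := exists_dist_sqrt_abs_le_of_continuousOn hcont hη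
  set T := ∫ t in a..b, (√|f' t| + η)
  filter_upwards [tendsto_natCast_atTop_atTop.eventually_ge_atTop (T / (η * δ)),
    eventually_ne_atTop 0] with n hnT hn
  have hn0 : (0 : ℝ) < n := by positivity
  have hg : ContinuousOn (fun t => √|f' t| + η) (Icc a b) := hcont.abs.sqrt.add continuousOn_const
  obtain ⟨x, rfl, rfl, hx, hequi⟩ :=
    exists_equipartition_integral hab hg (fun t _ => by positivity) hn
  have hmesh : ∀ k < n, x (k + 1) - x k ≤ δ := by
    intro k hk
    have hle : η * (x (k + 1) - x k) ≤ T / n := by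
      calc η * (x (k + 1) - x k) = ∫ _ in (x k)..(x (k + 1)), η := by
            rw [intervalIntegral.integral_const, smul_eq_mul, mul_comm]
        _ ≤ ∫ t in (x k)..(x (k + 1)), (√|f' t| + η) :=
            intervalIntegral.integral_mono_on (hx k hk).le intervalIntegrable_const
              ((hg.mono (Icc_subset_Icc_of_forall_lt_succ hx hk)).intervalIntegrable_of_Icc
                (hx k hk).le) fun t _ => le_add_of_nonneg_left (Real.sqrt_nonneg _)
        _ = T / n := hequi k hk
    refine le_of_mul_le_mul_left (hle.trans ?_) hη
    exact (div_le_comm₀ (by positivity) hn0).1 hnT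
  refine ⟨x, fun k => f ((x (k - 1) + x k) / 2), rfl, rfl, hx, ?_⟩
  calc ∑ k ∈ Finset.range n,
        ∫ t in (x k)..(x (k + 1)), |f t - f ((x (k + 1 - 1) + x (k + 1)) / 2)|
      ≤ ∑ _ ∈ Finset.range n, (T / n) ^ 2 / 4 := by
        refine Finset.sum_le_sum fun k hk => ?_
        have hkn := Finset.mem_range.1 hk
        have hsub := Icc_subset_Icc_of_forall_lt_succ hx hkn
        rw [add_tsub_cancel_right, ← hequi k hkn]
        exact integral_abs_sub_midpoint_le_sq_integral (hx k hkn).le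
          (fun y hy => (hd y (hsub hy)).mono hsub) (hcont.mono hsub) fun y hy z hz =>
            hosc y (hsub hy) z (hsub hz) ((Real.dist_le_of_mem_Icc hy hz).trans (hmesh k hkn))
    _ = T ^ 2 / 4 / n := by
        rw [Finset.sum_const, Finset.card_range, nsmul_eq_mul]
        field_simp

end StepApprox

/-- The V-complexity of a primitive of `f'` on `[a, b]`. It is encoded through the derivative, which
on `[a, b]` is one-sided at the endpoints. -/
noncomputable def vComplexity (f' : ℝ → ℝ) (a b : ℝ) : ℝ :=
  1 / 4 * (∫ x in a..b, √|f' x|) ^ 2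

lemma vComplexity_nonneg (f' : ℝ → ℝ) (a b : ℝ) : 0 ≤ vComplexity f' a b := by
  rw [vComplexity]
  positivity

section Bounds

variable {f f' : ℝ → ℝ} {a b c : ℝ}

lemma eventually_le_mul_of_hasStepApprox (hab : a < b)
    (hd : ∀ x ∈ Icc a b, HasDerivWithinAt f (f' x) (Icc a b) x)
    (hcont : ContinuousOn f' (Icc a b)) (hc : c < vComplexity f' a b) :
    ∀ᶠ ε in 𝓝[>] (0 : ℝ), ∀ n, HasStepApprox f a b n ε → c ≤ ε * n := by
  set S := ∫ x in a..b, √|f' x|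
  have hS0 : 0 ≤ S := intervalIntegral.integral_nonneg hab.le fun _ _ => Real.sqrt_nonneg _
  obtain hneg | hc0 := lt_or_ge c 0
  · filter_upwards [self_mem_nhdsWithin] with ε (hε : 0 < ε) n _
    exact hneg.le.trans (by positivity)
  have hgap : 0 < S - 2 * √c := by
    have : √c < S / 2 := by
      rw [Real.sqrt_lt hc0 (by positivity)]
      exact hc.trans_eq (by rw [vComplexity]; ring)
    linarith
  have hba : 0 < b - a := sub_pos.2 hab
  have hη : 0 < (S - 2 * √c) / (4 * (b - a)) := by positivity
  filter_upwards [eventually_integral_sqrt_abs_deriv_le hd hcont hη] with ε hε n hn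
  by_contra! hlt
  have hle : S ≤ (S - 2 * √c) / 2 + 2 * √(ε * n) := by
    refine (hε n hn).trans_eq ?_
    field_simp
    ring
  linarith [Real.sqrt_le_sqrt hlt.le]

lemma eventually_hasStepApprox_div (hab : a < b)
    (hd : ∀ x ∈ Icc a b, HasDerivWithinAt f (f' x) (Icc a b) x)
    (hcont : ContinuousOn f' (Icc a b)) (hc : vComplexity f' a b < c) :
    ∀ᶠ n : ℕ in atTop, HasStepApprox f a b n (c / n) := by
  set S := ∫ x in a..b, √|f' x| with hS
  have hba : 0 < b - a := sub_pos.2 hab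
  have hgap : 0 < 2 * √c - S := by
    have : S / 2 < √c := Real.lt_sqrt_of_sq_lt (hc.trans_eq' (by rw [vComplexity]; ring))
    linarith
  have hη : 0 < (2 * √c - S) / (b - a) := by positivity
  have hc0 : 0 ≤ c := (vComplexity_nonneg f' a b).trans hc.le
  have hT : ∫ t in a..b, (√|f' t| + (2 * √c - S) / (b - a)) = 2 * √c := by
    rw [intervalIntegral.integral_add (hcont.abs.sqrt.intervalIntegrable_of_Icc hab.le)
      intervalIntegrable_const, intervalIntegral.integral_const, smul_eq_mul,
      mul_div_cancel₀ _ hba.ne', ← hS, add_sub_cancel]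
  have hT4 : (2 * √c) ^ 2 / 4 = c := by
    rw [mul_pow, Real.sq_sqrt hc0]
    ring
  simpa only [hT, hT4] using eventually_hasStepApprox hab hd hcont hη

end Bounds

end VComplexity

open VComplexity in
theorem eps_mul_minimal_pieces_tendsto_V_complexity_general
    {f f' : ℝ → ℝ} {a b : ℝ} (hab : a < b)
    (hderiv : ∀ x ∈ Set.Icc a b, HasDerivWithinAt f (f' x) (Set.Icc a b) x)
    (hcont : ContinuousOn f' (Set.Icc a b)) :
    Filter.Tendsto (fun ε : ℝ => ε * (sInf {n | HasStepApprox f a b n ε} : ℕ))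
      (nhdsWithin 0 (Set.Ioi 0)) (nhds (vComplexity f' a b)) :=
  tendsto_mul_sInf_setOf (vComplexity_nonneg f' a b) (monotone_hasStepApprox f a b)
    (fun _ hc => eventually_hasStepApprox_div hab hderiv hcont hc)
    (fun _ hc => eventually_le_mul_of_hasStepApprox hab hderiv hcont hc)

/-- For a continuously differentiable `f` on `[a, b]`, letting `N ε` be the minimal number of
pieces of a step function approximating `f` within `L¹` error `ε`, the product `ε * N ε`
converges to the V-complexity `V f = (1/4) (∫_a^b |f'|^(1/2))²` as `ε → 0⁺`. -/
theorem eps_mul_minimal_pieces_tendsto_V_complexity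
    (f f' : ℝ → ℝ) (a b : ℝ) (hab : a < b)
    (hderiv : ∀ x ∈ Set.Icc a b, HasDerivAt f (f' x) x)
    (hcont : ContinuousOn f' (Set.Icc a b))
    (N : ℝ → ℕ)
    (hN : ∀ ε : ℝ, 0 < ε → N ε = sInf {n : ℕ |
      ∃ (x : ℕ → ℝ) (q : ℕ → ℝ),
        x 0 = a ∧ x n = b ∧ (∀ k < n, x k < x (k + 1)) ∧
        (∑ k ∈ Finset.range n, ∫ t in (x k)..(x (k + 1)), |f t - q (k + 1)|) ≤ ε}) :
    Filter.Tendsto (fun ε : ℝ => ε * (N ε : ℝ)) (nhdsWithin 0 (Set.Ioi 0))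
      (nhds ((1 / 4 : ℝ) * (∫ x in a..b, Real.sqrt |f' x|) ^ 2)) := by
  refine (eps_mul_minimal_pieces_tendsto_V_complexity_general hab
    (fun x hx => (hderiv x hx).hasDerivWithinAt) hcont).congr' ?_
  filter_upwards [self_mem_nhdsWithin] with ε hε
  rw [hN ε hε]
  rfl
end

section
/- Let α > 0, let f_α(x) = 1/(1 + e^{−αx}), and let θ : [−1,1] → ℝ be defined by θ(x) = 0 for x < 0, θ(0) = 1/2, and θ(x) = 1 for x > 0. Then ∫_{−1}^{1} |f_α(x) − θ(x)| dx = 1 − (1/α) · log((2 + e^α + e^{−α})/4). -/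
open MeasureTheory

/-!
Since `σ (-t) = 1 - σ t` for the sigmoid `σ`, and `θ (-x) = 1 - θ x` off the origin, the difference
`σ (α x) - θ x` is odd off the origin, so its absolute value is even and it suffices to integrate
over `x > 0`. There it equals `1 - σ (α x) = σ (-α x)`, and `t ↦ log (1 + exp t)` is an
antiderivative of `σ`.
-/

section EvenIntegral

variable {E : Type*} [NormedAddCommGroup E] [NormedSpace ℝ E]

theorem intervalIntegral_neg_self_of_even {f : ℝ → E} {r : ℝ} (hf : f.Even)
    (hint : IntervalIntegrable f volume 0 r) :
    ∫ x in -r..r, f x = (2 : ℝ) • ∫ x in 0..r, f x := by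
  have hint_neg : IntervalIntegrable f volume (-r) 0 := by
    simpa [hf _] using (IntervalIntegrable.iff_comp_neg (by finiteness)).mp hint |>.symm
  have hreflect : ∫ x in -r..0, f x = ∫ x in 0..r, f x := by
    simpa [hf _] using (intervalIntegral.integral_comp_neg f (a := 0) (b := r)).symm
  rw [← intervalIntegral.integral_add_adjacent_intervals hint_neg hint, hreflect, two_smul]

end EvenIntegral

section Sigmoid

open Real

theorem hasDerivAt_log_one_add_exp (x : ℝ) :
    HasDerivAt (fun t ↦ log (1 + exp t)) (sigmoid x) x := by
  have hderiv := ((hasDerivAt_exp x).const_add 1).log (by positivity)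
  refine hderiv.congr_deriv ?_
  rw [sigmoid_def, exp_neg]
  field

theorem integral_sigmoid (a b : ℝ) :
    ∫ x in a..b, sigmoid x = log (1 + exp b) - log (1 + exp a) :=
  intervalIntegral.integral_eq_sub_of_hasDerivAt (fun x _ ↦ hasDerivAt_log_one_add_exp x)
    (continuous_sigmoid.intervalIntegrable a b)

theorem integral_sigmoid_mul {c : ℝ} (hc : c ≠ 0) (a b : ℝ) :
    ∫ x in a..b, sigmoid (c * x) = c⁻¹ * (log (1 + exp (c * b)) - log (1 + exp (c * a))) := by
  rw [intervalIntegral.integral_comp_mul_left _ hc, integral_sigmoid, smul_eq_mul]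

theorem abs_sigmoid_sub_one (x : ℝ) : |sigmoid x - 1| = sigmoid (-x) := by
  rw [abs_sub_comm, ← sigmoid_neg, abs_of_pos (sigmoid_pos _)]

end Sigmoid

section Step

open Real

variable {θ : ℝ → ℝ}

theorem step_neg (hneg : ∀ x < 0, θ x = 0) (hpos : ∀ x > 0, θ x = 1) {x : ℝ} (hx : x ≠ 0) :
    θ (-x) = 1 - θ x := by
  rcases hx.lt_or_gt with hx | hx
  · rw [hneg x hx, hpos (-x) (neg_pos.mpr hx), sub_zero]
  · rw [hpos x hx, hneg (-x) (neg_neg_of_pos hx), sub_self]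

theorem even_abs_sigmoid_mul_sub_step (hneg : ∀ x < 0, θ x = 0) (hpos : ∀ x > 0, θ x = 1)
    (α : ℝ) : (fun x ↦ |sigmoid (α * x) - θ x|).Even := by
  intro x
  rcases eq_or_ne x 0 with rfl | hx
  · simp only [neg_zero]
  · dsimp only
    rw [mul_neg, sigmoid_neg, step_neg hneg hpos hx, sub_sub_sub_cancel_left, abs_sub_comm]

theorem integral_abs_sigmoid_mul_sub_step (hneg : ∀ x < 0, θ x = 0) (hpos : ∀ x > 0, θ x = 1)
    (α : ℝ) {r : ℝ} (hr : 0 ≤ r) :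
    ∫ x in -r..r, |sigmoid (α * x) - θ x| = 2 * ∫ x in 0..r, sigmoid (-α * x) := by
  have heq : Set.EqOn (fun x ↦ |sigmoid (α * x) - θ x|) (fun x ↦ sigmoid (-α * x))
      (Set.uIoo 0 r) := by
    intro x hx
    rw [Set.uIoo_of_le hr] at hx
    simp only [hpos x hx.1, abs_sigmoid_sub_one, neg_mul]
  have hint : IntervalIntegrable (fun x ↦ sigmoid (-α * x)) volume 0 r :=
    (continuous_sigmoid.comp (continuous_const_mul (-α))).intervalIntegrable 0 r
  rw [intervalIntegral_neg_self_of_even (even_abs_sigmoid_mul_sub_step hneg hpos α)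
    (hint.congr_uIoo heq.symm), intervalIntegral.integral_congr_uIoo heq, smul_eq_mul]

end Step

theorem log_two_add_exp_add_exp_neg_div_four (y : ℝ) :
    Real.log ((2 + Real.exp y + Real.exp (-y)) / 4) =
      y + 2 * (Real.log (1 + Real.exp (-y)) - Real.log 2) := by
  have hsq : (2 + Real.exp y + Real.exp (-y)) / 4 =
      Real.exp y * ((1 + Real.exp (-y)) / 2) ^ 2 := by
    rw [Real.exp_neg]
    field
  rw [hsq, Real.log_mul (by positivity) (by positivity), Real.log_exp, Real.log_pow,
    Real.log_div (by positivity) two_ne_zero, Nat.cast_ofNat]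

theorem sigmoid_L1_dist_step_general {α r : ℝ} (hα : α ≠ 0) (hr : 0 ≤ r) {θ : ℝ → ℝ}
    (hneg : ∀ x < 0, θ x = 0) (hpos : ∀ x > 0, θ x = 1) :
    ∫ x in -r..r, |1 / (1 + Real.exp (-α * x)) - θ x| =
      r - (1 / α) * Real.log ((2 + Real.exp (α * r) + Real.exp (-(α * r))) / 4) := by
  calc ∫ x in -r..r, |1 / (1 + Real.exp (-α * x)) - θ x|
      = ∫ x in -r..r, |Real.sigmoid (α * x) - θ x| := by
        simp only [Real.sigmoid_def, one_div, neg_mul]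
    _ = 2 * ((-α)⁻¹ * (Real.log (1 + Real.exp (-(α * r))) - Real.log 2)) := by
        rw [integral_abs_sigmoid_mul_sub_step hneg hpos α hr,
          integral_sigmoid_mul (neg_ne_zero.mpr hα), mul_zero, Real.exp_zero, one_add_one_eq_two,
          neg_mul]
    _ = r - (1 / α) * Real.log ((2 + Real.exp (α * r) + Real.exp (-(α * r))) / 4) := by
        rw [log_two_add_exp_add_exp_neg_div_four]
        field

/-- The `L¹` distance on `[-1, 1]` between the sigmoid `f_α(x) = 1/(1 + e^{-αx})` and the
step function `θ` equals `1 - (1/α) log((2 + e^α + e^{-α})/4)`. -/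
theorem sigmoid_L1_dist_step (α : ℝ) (hα : 0 < α)
    (θ : ℝ → ℝ)
    (hθ : ∀ x : ℝ, θ x = if x < 0 then 0 else if x = 0 then 1 / 2 else 1) :
    (∫ x in (-1 : ℝ)..1, |1 / (1 + Real.exp (-α * x)) - θ x|) =
      1 - (1 / α) * Real.log ((2 + Real.exp α + Real.exp (-α)) / 4) := by
  have hneg : ∀ x < 0, θ x = 0 := fun x hx ↦ by rw [hθ, if_pos hx]
  have hpos : ∀ x > 0, θ x = 1 := fun x hx ↦ by rw [hθ, if_neg hx.not_gt, if_neg hx.ne']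
  simpa only [mul_one] using sigmoid_L1_dist_step_general hα.ne' zero_le_one hneg hpos
end

section
/- Define u(x,t) = 1/2 − (2/π) Σ_{k=1}^{∞} (e^{−((2k−1)π/2)² t} / (2k−1)) · sin((2k−1)πx/2), and let u₀ : [−1,1] → ℝ be defined by u₀(x) = 1 for −1 ≤ x < 0, u₀(0) = 1/2, and u₀(x) = 0 for 0 < x ≤ 1. Then ∫_{−1}^{1} |u(x,t) − u₀(x)| dx → 0 as t → 0⁺; that is, u(·,t) converges to the initial datum u₀ in the L¹ norm on [−1,1] as t tends to zero from the right. -/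
open MeasureTheory Real

/-!
Up to the affine change `f ↦ (1 - f) / 2`, the initial datum is the sign function and `u` is its
heat flow. The sines `sin (ω x)` with `ω = (2k + 1)π / 2` are orthonormal in `L²[-1, 1]`, and the
sign function has coefficients `2 / ω` on them. By Euler's sum over the odd integers, the squares of
these coefficients add up to `2`, the squared norm of the sign function; equality in Bessel's
inequality then gives the `L²` expansion of the sign function without any completeness theorem. The
damping factors `exp (-ω² t)` are bounded by `1` and tend to `1` as `t → 0⁺`, so by dominated
convergence of the squared coefficients the heat flow tends to the sign function in `L²`, hence in
`L¹` since the interval has finite measure.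
-/

section OrthonormalSeries

open Filter
open scoped Topology InnerProductSpace

variable {𝕜 E ι : Type*} [RCLike 𝕜] [SeminormedAddCommGroup E] [InnerProductSpace 𝕜 E]
  {e : ι → E} {a : ι → 𝕜} {x : E}

lemma hasSum_norm_sq_of_orthonormal (he : Orthonormal 𝕜 e) (hx : HasSum (fun k ↦ a k • e k) x) :
    HasSum (fun k ↦ ‖a k‖ ^ 2) (‖x‖ ^ 2) :=
  (hx.norm.pow 2).congr fun s ↦ he.orthogonalFamily.norm_sum a s

lemma summable_smul_of_orthonormal [CompleteSpace E] (he : Orthonormal 𝕜 e)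
    (ha : Summable fun k ↦ ‖a k‖ ^ 2) : Summable fun k ↦ a k • e k :=
  (he.orthogonalFamily.summable_iff_norm_sq_summable a).2 ha

lemma norm_sub_sum_inner_smul_sq (he : Orthonormal 𝕜 e) (x : E) (s : Finset ι) :
    ‖x - ∑ k ∈ s, ⟪e k, x⟫_𝕜 • e k‖ ^ 2 = ‖x‖ ^ 2 - ∑ k ∈ s, ‖⟪e k, x⟫_𝕜‖ ^ 2 := by
  have norm_sum : ‖∑ k ∈ s, ⟪e k, x⟫_𝕜 • e k‖ ^ 2 = ∑ k ∈ s, ‖⟪e k, x⟫_𝕜‖ ^ 2 :=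
    he.orthogonalFamily.norm_sum (fun k ↦ ⟪e k, x⟫_𝕜) s
  have inner_eq_sum : ⟪x, ∑ k ∈ s, ⟪e k, x⟫_𝕜 • e k⟫_𝕜 =
      ((∑ k ∈ s, ‖⟪e k, x⟫_𝕜‖ ^ 2 : ℝ) : 𝕜) := by
    rw [inner_sum]
    push_cast
    refine Finset.sum_congr rfl fun k _ ↦ ?_
    rw [inner_smul_right, ← inner_conj_symm x, RCLike.mul_conj]
  rw [@norm_sub_sq 𝕜, inner_eq_sum, RCLike.ofReal_re, norm_sum]
  ring

lemma hasSum_inner_smul_of_hasSum_norm_inner_sq (he : Orthonormal 𝕜 e)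
    (hx : HasSum (fun k ↦ ‖⟪e k, x⟫_𝕜‖ ^ 2) (‖x‖ ^ 2)) :
    HasSum (fun k ↦ ⟪e k, x⟫_𝕜 • e k) x := by
  have norm_sq_tendsto :
      Tendsto (fun s ↦ ‖x - ∑ k ∈ s, ⟪e k, x⟫_𝕜 • e k‖ ^ 2) atTop (𝓝 0) := by
    simp_rw [norm_sub_sum_inner_smul_sq he]
    rw [← sub_self (‖x‖ ^ 2)]
    exact tendsto_const_nhds.sub hx
  have norm_tendsto := norm_sq_tendsto.sqrt
  simp only [Real.sqrt_sq (norm_nonneg _), Real.sqrt_zero, norm_sub_rev x] at norm_tendsto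
  exact tendsto_iff_norm_sub_tendsto_zero.2 norm_tendsto

lemma norm_tsum_mul_smul_sub_sq_of_orthonormal [CompleteSpace E] (he : Orthonormal 𝕜 e)
    (hx : HasSum (fun k ↦ a k • e k) x) {m : ι → 𝕜} {M : ℝ} (hm : ∀ k, ‖m k‖ ≤ M) :
    ‖∑' k, (m k * a k) • e k - x‖ ^ 2 = ∑' k, ‖m k * a k - a k‖ ^ 2 := by
  have damped_le (k) : ‖m k * a k‖ ^ 2 ≤ M ^ 2 * ‖a k‖ ^ 2 := by
    rw [norm_mul, mul_pow]
    gcongr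
    exact hm k
  have damped_summable : Summable fun k ↦ ‖m k * a k‖ ^ 2 :=
    ((hasSum_norm_sq_of_orthonormal he hx).summable.mul_left _).of_nonneg_of_le
      (fun k ↦ by positivity) damped_le
  have error_hasSum := (summable_smul_of_orthonormal he damped_summable).hasSum.sub hx
  simp only [← sub_smul] at error_hasSum
  exact (hasSum_norm_sq_of_orthonormal he error_hasSum).tsum_eq.symm

theorem tendsto_tsum_mul_smul_of_orthonormal [CompleteSpace E] (he : Orthonormal 𝕜 e)
    (hx : HasSum (fun k ↦ a k • e k) x) {T : Type*} {l : Filter T} {m : T → ι → 𝕜} {M : ℝ}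
    (hm_le : ∀ᶠ t in l, ∀ k, ‖m t k‖ ≤ M) (hm : ∀ k, Tendsto (m · k) l (𝓝 1)) :
    Tendsto (fun t ↦ ∑' k, (m t k * a k) • e k) l (𝓝 x) := by
  have error_le {t} (ht : ∀ k, ‖m t k‖ ≤ M) (k) :
      ‖m t k * a k - a k‖ ^ 2 ≤ (M + 1) ^ 2 * ‖a k‖ ^ 2 := by
    rw [← sub_one_mul, norm_mul, mul_pow]
    gcongr
    exact (norm_sub_le _ _).trans (by simpa using ht k)
  have error_tendsto : Tendsto (fun t ↦ ∑' k, ‖m t k * a k - a k‖ ^ 2) l (𝓝 0) := by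
    rw [← tsum_zero (α := ℝ) (β := ι)]
    refine tendsto_tsum_of_dominated_convergence
      ((hasSum_norm_sq_of_orthonormal he hx).summable.mul_left ((M + 1) ^ 2))
      (fun k ↦ ?_) (hm_le.mono fun t ht k ↦ ?_)
    · simpa using (((hm k).mul_const (a k)).sub_const (a k)).norm.pow 2
    · rw [norm_pow, norm_norm]
      exact error_le ht k
  have norm_sq_tendsto := error_tendsto.congr' <|
    hm_le.mono fun t ht ↦ (norm_tsum_mul_smul_sub_sq_of_orthonormal he hx ht).symm
  have norm_tendsto := norm_sq_tendsto.sqrt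
  simp only [Real.sqrt_sq (norm_nonneg _), Real.sqrt_zero] at norm_tendsto
  exact tendsto_iff_norm_sub_tendsto_zero.2 norm_tendsto

end OrthonormalSeries

section Lp

open Filter
open scoped Topology ENNReal InnerProductSpace

variable {α F : Type*} [MeasurableSpace α] {μ : Measure α} [NormedAddCommGroup F] {p : ℝ≥0∞}

lemma coeFn_tsum_smul_toLp {ι : Type*} [Countable ι] [NormedSpace ℝ F] [CompleteSpace F]
    [Fact (1 ≤ p)] {φ : ι → α → F} (hφ : ∀ k, MemLp (φ k) p μ) {c : ι → ℝ}
    (hc : Summable fun k ↦ ‖c k • (hφ k).toLp‖) :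
    ⇑(∑' k, c k • (hφ k).toLp) =ᵐ[μ] fun x ↦ ∑' k, c k • φ k x := by
  have term_ae (k) : ⇑(c k • (hφ k).toLp) =ᵐ[μ] c k • φ k :=
    (Lp.coeFn_smul _ _).trans ((hφ k).coeFn_toLp.const_smul (c k))
  filter_upwards [Lp.coeFn_tsum (tsum_enorm_ne_top_iff_summable_norm.2 hc),
    ae_all_iff.2 term_ae] with x hx hterm
  rw [hx]
  exact tsum_congr hterm

lemma integral_norm_le_mul_norm_Lp [IsFiniteMeasure μ] [hp : Fact (1 ≤ p)] (f : Lp F p μ) :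
    ∫ x, ‖f x‖ ∂μ ≤ ‖f‖ * μ.real Set.univ ^ (1 - 1 / p.toReal) := by
  have exponent_nonneg : 0 ≤ 1 - 1 / p.toReal := by
    rcases eq_or_ne p ∞ with rfl | p_ne_top
    · simp
    · exact sub_nonneg.2 (div_le_one_of_le₀ (ENNReal.toReal_mono p_ne_top hp.out) (by simp))
  have := eLpNorm_le_eLpNorm_mul_rpow_measure_univ hp.out (Lp.aestronglyMeasurable f)
  rw [integral_norm_eq_lintegral_enorm (Lp.aestronglyMeasurable f),
    ← eLpNorm_one_eq_lintegral_enorm, Lp.norm_def, Measure.real, ENNReal.toReal_rpow,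
    ← ENNReal.toReal_mul]
  refine ENNReal.toReal_mono (ENNReal.mul_ne_top (Lp.eLpNorm_ne_top f) ?_) (by simpa using this)
  exact ENNReal.rpow_ne_top_of_nonneg exponent_nonneg (measure_ne_top μ _)

lemma tendsto_integral_norm_sub_of_tendsto_Lp [IsFiniteMeasure μ] [Fact (1 ≤ p)] {T : Type*}
    {l : Filter T} {f : T → Lp F p μ} {g : Lp F p μ} (hf : Tendsto f l (𝓝 g)) :
    Tendsto (fun t ↦ ∫ x, ‖f t x - g x‖ ∂μ) l (𝓝 0) := by
  have bound_tendsto := (tendsto_iff_norm_sub_tendsto_zero.1 hf).mul_const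
    (μ.real Set.univ ^ (1 - 1 / p.toReal))
  rw [zero_mul] at bound_tendsto
  refine squeeze_zero (fun t ↦ integral_nonneg fun x ↦ norm_nonneg _) (fun t ↦ ?_) bound_tendsto
  calc ∫ x, ‖f t x - g x‖ ∂μ = ∫ x, ‖(f t - g) x‖ ∂μ :=
        integral_congr_ae ((Lp.coeFn_sub (f t) g).mono fun x hx ↦ congrArg norm hx.symm)
    _ ≤ _ := integral_norm_le_mul_norm_Lp (f t - g)

lemma inner_toLp_toLp {𝕜 : Type*} [RCLike 𝕜] [InnerProductSpace 𝕜 F] {f g : α → F}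
    (hf : MemLp f 2 μ) (hg : MemLp g 2 μ) :
    ⟪hf.toLp, hg.toLp⟫_𝕜 = ∫ x, ⟪f x, g x⟫_𝕜 ∂μ := by
  rw [L2.inner_def]
  refine integral_congr_ae ?_
  filter_upwards [hf.coeFn_toLp, hg.coeFn_toLp] with x hfx hgx
  rw [hfx, hgx]

end Lp

section NeumannSine

open Filter
open scoped Topology InnerProductSpace

/-- Lebesgue measure on `[-1, 1]`, taken on the half-open interval used by interval integrals. -/
noncomputable abbrev cupMeasure : Measure ℝ := volume.restrict (Set.Ioc (-1) 1)

/-- The frequencies `(2k + 1)π / 2` at which `x ↦ sin (ω x)` satisfies the Neumann condition at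
`±1`, enumerated from `k = 0`; the corresponding eigenvalue of `-d²/dx²` is `ω ^ 2`. -/
noncomputable def neumannFreq (k : ℕ) : ℝ := (2 * k + 1) * π / 2

/-- The odd Neumann eigenfunctions of `[-1, 1]`; they have norm `1` in `L²`. -/
noncomputable def neumannSine (k : ℕ) (x : ℝ) : ℝ := sin (neumannFreq k * x)

lemma integral_cupMeasure (f : ℝ → ℝ) : ∫ x, f x ∂cupMeasure = ∫ x in (-1)..1, f x :=
  (intervalIntegral.integral_of_le (by norm_num)).symm

lemma pi_div_two_le_neumannFreq (k : ℕ) : π / 2 ≤ neumannFreq k := by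
  rw [neumannFreq]
  gcongr
  exact le_mul_of_one_le_left pi_pos.le (by simp)

lemma neumannFreq_pos (k : ℕ) : 0 < neumannFreq k :=
  pi_div_two_pos.trans_le (pi_div_two_le_neumannFreq k)

lemma continuous_neumannSine (k : ℕ) : Continuous (neumannSine k) := by
  unfold neumannSine
  fun_prop

lemma memLp_neumannSine (k : ℕ) : MemLp (neumannSine k) 2 cupMeasure :=
  .of_bound (continuous_neumannSine k).aestronglyMeasurable 1
    (.of_forall fun _ ↦ abs_sin_le_one _)

lemma measurable_realSign : Measurable Real.sign :=
  .ite measurableSet_Iio measurable_const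
    (.ite measurableSet_Ioi measurable_const measurable_const)

lemma abs_realSign_le_one (x : ℝ) : |Real.sign x| ≤ 1 := by
  rcases Real.sign_apply_eq x with h | h | h <;> simp [h]

lemma memLp_realSign : MemLp Real.sign 2 cupMeasure :=
  .of_bound measurable_realSign.aestronglyMeasurable 1 (.of_forall abs_realSign_le_one)

lemma integral_cos_int_mul_pi_mul {m : ℤ} (hm : m ≠ 0) :
    ∫ x in (-1)..1, cos (m * π * x) = 0 := by
  have freq_ne_zero : (m : ℝ) * π ≠ 0 := mul_ne_zero (Int.cast_ne_zero.2 hm) pi_ne_zero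
  rw [intervalIntegral.integral_comp_mul_left cos freq_ne_zero, integral_cos]
  simp

lemma neumannSine_mul_neumannSine (j k : ℕ) (x : ℝ) :
    neumannSine j x * neumannSine k x =
      (cos (((j - k : ℤ) : ℝ) * π * x) - cos (((j + k + 1 : ℤ) : ℝ) * π * x)) / 2 := by
  have sub_freq : ((j - k : ℤ) : ℝ) * π * x = neumannFreq j * x - neumannFreq k * x := by
    push_cast [neumannFreq]
    ring
  have add_freq : ((j + k + 1 : ℤ) : ℝ) * π * x = neumannFreq j * x + neumannFreq k * x := by
    push_cast [neumannFreq]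
    ring
  rw [sub_freq, add_freq, ← two_mul_sin_mul_sin, neumannSine, neumannSine]
  ring

lemma integral_neumannSine_mul_neumannSine (j k : ℕ) :
    ∫ x in (-1)..1, neumannSine j x * neumannSine k x = if j = k then 1 else 0 := by
  simp_rw [neumannSine_mul_neumannSine]
  rw [intervalIntegral.integral_div, intervalIntegral.integral_sub
    ((by fun_prop : Continuous _).intervalIntegrable _ _)
    ((by fun_prop : Continuous _).intervalIntegrable _ _),
    integral_cos_int_mul_pi_mul (by lia : (j + k + 1 : ℤ) ≠ 0)]
  split_ifs with hjk
  · subst hjk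
    norm_num
  · rw [integral_cos_int_mul_pi_mul (by lia)]
    simp

lemma orthonormal_neumannSine : Orthonormal ℝ fun k ↦ (memLp_neumannSine k).toLp := by
  rw [orthonormal_iff_ite]
  intro j k
  rw [inner_toLp_toLp, integral_cupMeasure, ← integral_neumannSine_mul_neumannSine]
  simp only [RCLike.inner_apply', conj_trivial]

lemma integral_mul_realSign {g : ℝ → ℝ} {a b : ℝ} (ha : a ≤ 0) (hb : 0 ≤ b)
    (hg : IntervalIntegrable g volume a b) :
    ∫ x in a..b, g x * Real.sign x = (∫ x in 0..b, g x) - ∫ x in a..0, g x := by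
  have integrable : IntervalIntegrable (fun x ↦ g x * Real.sign x) volume a b :=
    ⟨hg.1.mul_bdd measurable_realSign.aestronglyMeasurable (.of_forall abs_realSign_le_one),
      hg.2.mul_bdd measurable_realSign.aestronglyMeasurable (.of_forall abs_realSign_le_one)⟩
  have neg_part : ∫ x in a..0, g x * Real.sign x = -∫ x in a..0, g x := by
    rw [← intervalIntegral.integral_neg]
    refine intervalIntegral.integral_congr_Ioo_of_le ha fun x hx ↦ ?_
    simp [Real.sign_of_neg hx.2]
  have pos_part : ∫ x in 0..b, g x * Real.sign x = ∫ x in 0..b, g x :=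
    intervalIntegral.integral_congr_Ioo_of_le hb fun x hx ↦ by simp [Real.sign_of_pos hx.1]
  have zero_mem : (0 : ℝ) ∈ Set.uIcc a b := Set.mem_uIcc_of_le ha hb
  rw [← intervalIntegral.integral_add_adjacent_intervals
    (integrable.mono_set (Set.uIcc_subset_uIcc_left zero_mem))
    (integrable.mono_set (Set.uIcc_subset_uIcc_right zero_mem)), neg_part, pos_part]
  ring

lemma cos_neumannFreq (k : ℕ) : cos (neumannFreq k) = 0 :=
  cos_eq_zero_iff.2 ⟨k, by simp [neumannFreq]⟩

lemma integral_neumannSine (k : ℕ) (a b : ℝ) :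
    ∫ x in a..b, neumannSine k x =
      (cos (neumannFreq k * a) - cos (neumannFreq k * b)) / neumannFreq k := by
  simp only [neumannSine]
  rw [intervalIntegral.integral_comp_mul_left sin (neumannFreq_pos k).ne', integral_sin]
  simp [div_eq_inv_mul]

lemma inner_neumannSine_realSign (k : ℕ) :
    ⟪(memLp_neumannSine k).toLp, memLp_realSign.toLp⟫_ℝ = 2 / neumannFreq k := by
  rw [inner_toLp_toLp, integral_cupMeasure]
  simp only [RCLike.inner_apply', conj_trivial]
  rw [integral_mul_realSign (by simp) (by simp)
    ((continuous_neumannSine k).intervalIntegrable _ _), integral_neumannSine,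
    integral_neumannSine]
  simp only [mul_zero, mul_one, mul_neg, cos_zero, cos_neg, cos_neumannFreq]
  ring

lemma norm_realSign_sq : ‖memLp_realSign.toLp‖ ^ 2 = 2 := by
  have sign_sq_ae : ∀ᵐ x ∂cupMeasure, ⟪Real.sign x, Real.sign x⟫_ℝ = 1 := by
    filter_upwards [Measure.ae_ne cupMeasure 0] with x hx
    rcases Real.sign_apply_eq_of_ne_zero x hx with h | h <;> simp [h]
  rw [← real_inner_self_eq_norm_sq, inner_toLp_toLp, integral_congr_ae sign_sq_ae,
    integral_cupMeasure]
  norm_num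

lemma hasSum_one_div_odd_sq : HasSum (fun k : ℕ ↦ 1 / (2 * k + 1 : ℝ) ^ 2) (π ^ 2 / 8) := by
  have even_terms : HasSum (fun k : ℕ ↦ 1 / ((2 * k : ℕ) : ℝ) ^ 2) (π ^ 2 / 24) := by
    convert! hasSum_zeta_two.mul_left (1 / 4) using 1
    · ext k
      push_cast
      ring
    · ring
  have odd_summable : Summable fun k : ℕ ↦ 1 / ((2 * k + 1 : ℕ) : ℝ) ^ 2 :=
    hasSum_zeta_two.summable.comp_injective (i := fun k ↦ 2 * k + 1) fun j k hjk ↦ by grind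
  have tsum_add := (HasSum.even_add_odd (f := fun n : ℕ ↦ 1 / (n : ℝ) ^ 2)
    even_terms odd_summable.hasSum).unique hasSum_zeta_two
  have odd_hasSum : HasSum (fun k : ℕ ↦ 1 / ((2 * k + 1 : ℕ) : ℝ) ^ 2) (π ^ 2 / 8) :=
    odd_summable.hasSum_iff.2 (by linarith)
  exact_mod_cast odd_hasSum

lemma hasSum_one_div_neumannFreq_sq : HasSum (fun k ↦ 1 / neumannFreq k ^ 2) (1 / 2) := by
  convert! hasSum_one_div_odd_sq.mul_left (4 / π ^ 2) using 1
  · ext k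
    rw [neumannFreq]
    field_simp
    norm_num
  · field_simp
    norm_num

lemma hasSum_realSign :
    HasSum (fun k ↦ (2 / neumannFreq k) • (memLp_neumannSine k).toLp) memLp_realSign.toLp := by
  have parseval : HasSum (fun k ↦ ‖2 / neumannFreq k‖ ^ 2) (‖memLp_realSign.toLp‖ ^ 2) := by
    rw [norm_realSign_sq]
    convert! hasSum_one_div_neumannFreq_sq.mul_left 4 using 1
    · ext k
      rw [norm_eq_abs, sq_abs]
      ring
    · norm_num
  simp only [← inner_neumannSine_realSign] at parseval ⊢
  exact hasSum_inner_smul_of_hasSum_norm_inner_sq orthonormal_neumannSine parseval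

lemma summable_exp_neg_neumannFreq_sq_mul {t : ℝ} (ht : 0 < t) :
    Summable fun k ↦ exp (-neumannFreq k ^ 2 * t) := by
  refine (hasSum_one_div_neumannFreq_sq.summable.mul_left (1 / t)).of_nonneg_of_le
    (fun k ↦ (exp_pos _).le) fun k ↦ ?_
  have rate_pos : 0 < neumannFreq k ^ 2 * t := mul_pos (pow_pos (neumannFreq_pos k) 2) ht
  calc exp (-neumannFreq k ^ 2 * t) = (exp (neumannFreq k ^ 2 * t))⁻¹ := by
        rw [neg_mul, exp_neg]
    _ ≤ (neumannFreq k ^ 2 * t)⁻¹ :=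
        inv_anti₀ rate_pos ((le_add_of_nonneg_right zero_le_one).trans (add_one_le_exp _))
    _ = 1 / t * (1 / neumannFreq k ^ 2) := by
        rw [mul_inv_rev, one_div, one_div]

/-- The solution at time `t` and position `x` of the heat equation on `[-1, 1]` with homogeneous
Neumann conditions and initial datum `Real.sign`, as a series of eigenfunctions. -/
noncomputable def signHeatFlow (t x : ℝ) : ℝ :=
  ∑' k, (exp (-neumannFreq k ^ 2 * t) * (2 / neumannFreq k)) * neumannSine k x

lemma coeFn_tsum_signHeatFlow {t : ℝ} (ht : 0 < t) :
    ⇑(∑' k, (exp (-neumannFreq k ^ 2 * t) * (2 / neumannFreq k)) • (memLp_neumannSine k).toLp)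
      =ᵐ[cupMeasure] signHeatFlow t := by
  refine coeFn_tsum_smul_toLp memLp_neumannSine ?_
  refine ((summable_exp_neg_neumannFreq_sq_mul ht).mul_right (4 / π)).of_nonneg_of_le
    (fun k ↦ norm_nonneg _) fun k ↦ ?_
  rw [norm_smul, orthonormal_neumannSine.1 k, mul_one, norm_mul, norm_of_nonneg (exp_pos _).le,
    norm_of_nonneg (div_pos two_pos (neumannFreq_pos k)).le]
  refine mul_le_mul_of_nonneg_left ?_ (exp_pos _).le
  calc 2 / neumannFreq k ≤ 2 / (π / 2) :=
        div_le_div_of_nonneg_left two_pos.le pi_div_two_pos (pi_div_two_le_neumannFreq k)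
    _ = 4 / π := by ring

theorem tendsto_tsum_signHeatFlow :
    Tendsto (fun t ↦ ∑' k,
        (exp (-neumannFreq k ^ 2 * t) * (2 / neumannFreq k)) • (memLp_neumannSine k).toLp)
      (𝓝[>] 0) (𝓝 memLp_realSign.toLp) := by
  refine tendsto_tsum_mul_smul_of_orthonormal (M := 1) orthonormal_neumannSine hasSum_realSign
    ?_ fun k ↦ ?_
  · filter_upwards [self_mem_nhdsWithin] with t ht k
    have rate_nonneg : 0 ≤ neumannFreq k ^ 2 * t := mul_nonneg (sq_nonneg _) (Set.mem_Ioi.1 ht).le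
    simpa using rate_nonneg
  · have : Continuous fun t ↦ exp (-neumannFreq k ^ 2 * t) := by fun_prop
    simpa using (this.tendsto 0).mono_left nhdsWithin_le_nhds

theorem tendsto_integral_abs_signHeatFlow_sub :
    Tendsto (fun t ↦ ∫ x in (-1)..1, |signHeatFlow t x - Real.sign x|) (𝓝[>] 0) (𝓝 0) := by
  refine (tendsto_integral_norm_sub_of_tendsto_Lp tendsto_tsum_signHeatFlow).congr' ?_
  filter_upwards [self_mem_nhdsWithin] with t ht
  rw [← integral_cupMeasure]
  refine integral_congr_ae ?_
  filter_upwards [coeFn_tsum_signHeatFlow ht, memLp_realSign.coeFn_toLp] with x hflow hsign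
  rw [hflow, hsign, norm_eq_abs]

lemma one_sub_realSign_div_two (x : ℝ) :
    (1 - Real.sign x) / 2 = if x < 0 then 1 else if x = 0 then 1 / 2 else 0 := by
  rcases lt_trichotomy x 0 with hx | rfl | hx
  · norm_num [Real.sign_of_neg hx, hx]
  · norm_num
  · norm_num [Real.sign_of_pos hx, hx.not_gt, hx.ne']

lemma one_sub_signHeatFlow_div_two (t x : ℝ) :
    (1 - signHeatFlow t x) / 2 = 1 / 2 - (2 / π) * ∑' k : ℕ,
      exp (-((2 * (k : ℝ) + 1) * π / 2) ^ 2 * t) / (2 * (k : ℝ) + 1) *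
        sin ((2 * (k : ℝ) + 1) * π * x / 2) := by
  rw [sub_div, signHeatFlow, ← tsum_div_const, ← tsum_mul_left]
  congr! 3 with k
  rw [neumannSine, neumannFreq, div_mul_eq_mul_div _ _ x]
  field_simp

end NeumannSine

/-- The Fourier-series solution `u(x,t)` of the heat equation converges in `L¹` norm on
`[-1, 1]` to the step-function initial datum `u₀` as `t → 0⁺`. -/
theorem heat_solution_tendsto_initial_datum_L1
    (u : ℝ → ℝ → ℝ)
    (hu : ∀ x t : ℝ, u x t = 1 / 2 - (2 / π) * ∑' k : ℕ,
      Real.exp (-((2 * (k : ℝ) + 1) * π / 2) ^ 2 * t) / (2 * (k : ℝ) + 1) *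
        Real.sin ((2 * (k : ℝ) + 1) * π * x / 2))
    (u₀ : ℝ → ℝ)
    (hu₀ : ∀ x : ℝ, u₀ x = if x < 0 then 1 else if x = 0 then 1 / 2 else 0) :
    Filter.Tendsto (fun t : ℝ => ∫ x in (-1 : ℝ)..1, |u x t - u₀ x|)
      (nhdsWithin 0 (Set.Ioi 0)) (nhds 0) := by
  have abs_error (t x : ℝ) : |u x t - u₀ x| = |signHeatFlow t x - Real.sign x| / 2 := by
    rw [hu, hu₀, ← one_sub_signHeatFlow_div_two, ← one_sub_realSign_div_two, ← sub_div,
      abs_div, abs_two, sub_sub_sub_cancel_left, abs_sub_comm]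
  simp_rw [abs_error, intervalIntegral.integral_div]
  simpa using tendsto_integral_abs_signHeatFlow_sub.div_const 2
end

section
/- Let f be continuously differentiable on a compact interval [a,b], let [c,d] ⊆ [a,b] with c < d, and suppose f is constant on [c,d] (equivalently, f'(x) = 0 for all x ∈ [c,d]). Define f̂ on the interval [a, b − (d − c)] by f̂(x) = f(x) for a ≤ x ≤ c and f̂(x) = f(x + d − c) for c < x ≤ b − (d − c). Then f̂ is continuously differentiable on [a, b − (d − c)] and V(f̂) = V(f). -/
open MeasureTheory

/-! The derivative of a function that is constant on `[c, d]` vanishes there, so `f` and `f'` each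
take equal values at the two ends of the gap. Excising `[c, d]` from both therefore glues the two
remaining pieces into a `C¹` function whose derivative is the excision of `f'`. An integral of
`φ ∘ f'` with `φ 0 = 0` receives nothing from `[c, d]` and is translation invariant on the rest;
the V-complexity is the case `φ t = √|t|`. -/

section Derivative

variable {𝕜 E : Type*} [NontriviallyNormedField 𝕜] [NormedAddCommGroup E] [NormedSpace 𝕜 E]
  {f : 𝕜 → E} {m : E} {s t : Set 𝕜} {x : 𝕜}

theorem hasDerivWithinAt_eq_zero_of_forall_eq {k : E} (hs : UniqueDiffWithinAt 𝕜 s x)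
    (hf : HasDerivWithinAt f m s x) (hx : x ∈ s) (hconst : ∀ y ∈ s, f y = k) : m = 0 :=
  hs.eq_deriv s hf ((hasDerivWithinAt_const x s k).congr hconst (hconst x hx))

theorem hasDerivWithinAt_union_of_isClosed (hs : IsClosed s) (ht : IsClosed t)
    (hfs : x ∈ s → HasDerivWithinAt f m s x) (hft : x ∈ t → HasDerivWithinAt f m t x) :
    HasDerivWithinAt f m (s ∪ t) x := by
  have of_closed {r : Set 𝕜} (hr : IsClosed r) (hfr : x ∈ r → HasDerivWithinAt f m r x) :
      HasDerivWithinAt f m r x := by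
    by_cases hx : x ∈ r
    · exact hfr hx
    · exact HasFDerivWithinAt.of_notMem_closure (by rwa [hr.closure_eq])
  exact (of_closed hs hfs).union (of_closed ht hft)

end Derivative

section Excision

open Set

/-- The excision `û` of the interval `[c, d]` from a function `u`: it is `u` up to `c`, followed by
the part of `u` to the right of `d`, translated by `d - c` so as to start at `c`. At the junction
`c` it takes the value `u c`. -/
noncomputable def excise {α : Type*} (c d : ℝ) (u : ℝ → α) (x : ℝ) : α :=
  if x ≤ c then u x else u (x + (d - c))

variable {α : Type*} {u : ℝ → α} {a b c d x : ℝ}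

theorem excise_of_le (hx : x ≤ c) : excise c d u x = u x := if_pos hx

theorem excise_of_lt (hx : c < x) : excise c d u x = u (x + (d - c)) := if_neg hx.not_ge

theorem excise_of_ge (hu : u c = u d) (hx : c ≤ x) : excise c d u x = u (x + (d - c)) := by
  rcases hx.eq_or_lt with rfl | hx
  · rw [excise_of_le le_rfl, add_sub_cancel, hu]
  · exact excise_of_lt hx

theorem apply_excise {β : Type*} (φ : α → β) : φ (excise c d u x) = excise c d (φ ∘ u) x :=
  apply_ite φ _ _ _

theorem Icc_excise_eq_union (hac : a ≤ c) (hdb : d ≤ b) :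
    Icc a (b - (d - c)) = Icc a c ∪ Icc c (b - (d - c)) :=
  (Icc_union_Icc_eq_Icc hac (by linarith)).symm

theorem mapsTo_add_sub_Icc : MapsTo (· + (d - c)) (Icc c (b - (d - c))) (Icc d b) :=
  fun _ hx => ⟨by linarith [hx.1], by linarith [hx.2]⟩

theorem continuousOn_excise [TopologicalSpace α] (hac : a ≤ c) (hdb : d ≤ b)
    (hleft : ContinuousOn u (Icc a c)) (hright : ContinuousOn u (Icc d b)) (hu : u c = u d) :
    ContinuousOn (excise c d u) (Icc a (b - (d - c))) := by
  rw [Icc_excise_eq_union hac hdb]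
  refine ContinuousOn.union_of_isClosed ?_ ?_ isClosed_Icc isClosed_Icc
  · exact hleft.congr fun x hx => excise_of_le hx.2
  · exact (hright.comp (by fun_prop) mapsTo_add_sub_Icc).congr fun x hx => excise_of_ge hu hx.1

variable {E : Type*} [NormedAddCommGroup E] [NormedSpace ℝ E]

theorem hasDerivWithinAt_excise {f f' : ℝ → E} (hac : a ≤ c) (hdb : d ≤ b)
    (hleft : ∀ x ∈ Icc a c, HasDerivWithinAt f (f' x) (Icc a c) x)
    (hright : ∀ x ∈ Icc d b, HasDerivWithinAt f (f' x) (Icc d b) x)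
    (hf : f c = f d) (hf' : f' c = f' d) (x : ℝ) :
    HasDerivWithinAt (excise c d f) (excise c d f' x) (Icc a (b - (d - c))) x := by
  rw [Icc_excise_eq_union hac hdb]
  refine hasDerivWithinAt_union_of_isClosed isClosed_Icc isClosed_Icc (fun hx => ?_) fun hx => ?_
  · rw [excise_of_le hx.2]
    exact (hleft x hx).congr (fun y hy => excise_of_le hy.2) (excise_of_le hx.2)
  · have hshift : HasDerivWithinAt (fun y => f (y + (d - c))) (f' (x + (d - c)))
        (Icc c (b - (d - c))) x := by
      simpa only [one_smul, Function.comp_def, id_eq] using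
        (hright _ (mapsTo_add_sub_Icc hx)).scomp x
          ((hasDerivWithinAt_id x _).add_const (d - c)) mapsTo_add_sub_Icc
    rw [excise_of_ge hf' hx.1]
    exact hshift.congr (fun y hy => excise_of_ge hf hy.1) (excise_of_ge hf hx.1)

theorem integral_excise {u : ℝ → E} (hac : a ≤ c) (hdb : d ≤ b)
    (hleft : IntervalIntegrable u volume a c) (hright : IntervalIntegrable u volume d b) :
    ∫ x in a..(b - (d - c)), excise c d u x = (∫ x in a..c, u x) + ∫ x in d..b, u x := by
  have eq_left : EqOn u (excise c d u) (uIoo a c) := by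
    rw [uIoo_of_le hac]
    exact fun x hx => (excise_of_le hx.2.le).symm
  have eq_right : EqOn (fun x => u (x + (d - c))) (excise c d u) (uIoo c (b - (d - c))) := by
    rw [uIoo_of_le (by linarith)]
    exact fun x hx => (excise_of_lt hx.1).symm
  have hshift : IntervalIntegrable (fun x => u (x + (d - c))) volume c (b - (d - c)) := by
    simpa only [sub_sub_cancel] using hright.comp_add_right (d - c)
  rw [← intervalIntegral.integral_add_adjacent_intervals (hleft.congr_uIoo eq_left)
      (hshift.congr_uIoo eq_right),
    ← intervalIntegral.integral_congr_uIoo eq_left,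
    ← intervalIntegral.integral_congr_uIoo eq_right,
    intervalIntegral.integral_comp_add_right, add_sub_cancel, sub_add_cancel]

theorem integral_excise_of_eqOn_zero {u : ℝ → E} (hac : a ≤ c) (hcd : c ≤ d) (hdb : d ≤ b)
    (hu : IntervalIntegrable u volume a b) (hzero : EqOn u 0 (Icc c d)) :
    ∫ x in a..(b - (d - c)), excise c d u x = ∫ x in a..b, u x := by
  have hc : c ∈ uIcc a b := mem_uIcc_of_le hac (hcd.trans hdb)
  have hd : d ∈ uIcc a b := mem_uIcc_of_le (hac.trans hcd) hdb
  have left := hu.mono_set (uIcc_subset_uIcc_left hc)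
  have gap := hu.mono_set (uIcc_subset_uIcc hc hd)
  have right := hu.mono_set (uIcc_subset_uIcc_right hd)
  have gap_integral : ∫ x in c..d, u x = 0 :=
    intervalIntegral.integral_zero_ae <| .of_forall fun x hx =>
      hzero (Ioc_subset_Icc_self (uIoc_of_le hcd ▸ hx))
  rw [integral_excise hac hdb left right,
    ← intervalIntegral.integral_add_adjacent_intervals (left.trans gap) right,
    ← intervalIntegral.integral_add_adjacent_intervals left gap, gap_integral, add_zero]

theorem V_complexity_excise_constant_interval_general {f f' g : ℝ → E} {φ : E → ℝ}
    (hφ : Continuous φ) (hφ0 : φ 0 = 0) (hac : a ≤ c) (hcd : c < d) (hdb : d ≤ b)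
    (hderiv : ∀ x ∈ Icc a b, HasDerivWithinAt f (f' x) (Icc a b) x)
    (hcont : ContinuousOn f' (Icc a b))
    (hconst : ∀ x ∈ Icc c d, f x = f c)
    (hg₁ : ∀ x ∈ Icc a c, g x = f x)
    (hg₂ : ∀ x ∈ Ioc c (b - (d - c)), g x = f (x + (d - c))) :
    ∃ g' : ℝ → E,
      (∀ x ∈ Icc a (b - (d - c)), HasDerivWithinAt g (g' x) (Icc a (b - (d - c))) x) ∧
      ContinuousOn g' (Icc a (b - (d - c))) ∧
      ∫ x in a..(b - (d - c)), φ (g' x) = ∫ x in a..b, φ (f' x) := by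
  have left_sub : Icc a c ⊆ Icc a b := Icc_subset_Icc_right (hcd.le.trans hdb)
  have gap_sub : Icc c d ⊆ Icc a b := Icc_subset_Icc hac hdb
  have right_sub : Icc d b ⊆ Icc a b := Icc_subset_Icc_left (hac.trans hcd.le)
  have f'_gap : ∀ x ∈ Icc c d, f' x = 0 := fun x hx =>
    hasDerivWithinAt_eq_zero_of_forall_eq (uniqueDiffOn_Icc hcd x hx)
      ((hderiv x (gap_sub hx)).mono gap_sub) hx hconst
  have f_ends : f c = f d := (hconst d (right_mem_Icc.2 hcd.le)).symm
  have f'_ends : f' c = f' d :=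
    (f'_gap c (left_mem_Icc.2 hcd.le)).trans (f'_gap d (right_mem_Icc.2 hcd.le)).symm
  have g_eq : ∀ x ∈ Icc a (b - (d - c)), g x = excise c d f x := by
    intro x hx
    rcases le_or_gt x c with hxc | hcx
    · rw [hg₁ x ⟨hx.1, hxc⟩, excise_of_le hxc]
    · rw [hg₂ x ⟨hcx, hx.2⟩, excise_of_lt hcx]
  refine ⟨excise c d f', fun x hx => ?_, ?_, ?_⟩
  · exact (hasDerivWithinAt_excise hac hdb
      (fun y hy => (hderiv y (left_sub hy)).mono left_sub)
      (fun y hy => (hderiv y (right_sub hy)).mono right_sub)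
      f_ends f'_ends x).congr g_eq (g_eq x hx)
  · exact continuousOn_excise hac hdb (hcont.mono left_sub) (hcont.mono right_sub) f'_ends
  · have φ_integrable : IntervalIntegrable (φ ∘ f') volume a b :=
      (hφ.comp_continuousOn hcont).intervalIntegrable_of_Icc (hac.trans (hcd.le.trans hdb))
    have φ_gap : EqOn (φ ∘ f') 0 (Icc c d) := fun x hx => (congrArg φ (f'_gap x hx)).trans hφ0
    simp only [apply_excise φ]
    exact integral_excise_of_eqOn_zero hac hcd.le hdb φ_integrable φ_gap

end Excision

/-- Excising a subinterval `[c, d]` on which `f` is constant and translating the right-hand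
piece to close the gap yields a continuously differentiable function `f̂` on
`[a, b - (d - c)]` with the same V-complexity as `f`. -/
theorem V_complexity_excise_constant_interval
    (f f' : ℝ → ℝ) (a b c d : ℝ)
    (hac : a ≤ c) (hcd : c < d) (hdb : d ≤ b)
    (hderiv : ∀ x ∈ Set.Icc a b, HasDerivAt f (f' x) x)
    (hcont : ContinuousOn f' (Set.Icc a b))
    (hconst : ∀ x ∈ Set.Icc c d, f x = f c)
    (g : ℝ → ℝ)
    (hg₁ : ∀ x ∈ Set.Icc a c, g x = f x)
    (hg₂ : ∀ x ∈ Set.Ioc c (b - (d - c)), g x = f (x + (d - c))) :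
    ∃ g' : ℝ → ℝ,
      (∀ x ∈ Set.Icc a (b - (d - c)),
        HasDerivWithinAt g (g' x) (Set.Icc a (b - (d - c))) x) ∧
      ContinuousOn g' (Set.Icc a (b - (d - c))) ∧
      (1 / 4 : ℝ) * (∫ x in a..(b - (d - c)), Real.sqrt |g' x|) ^ 2 =
        (1 / 4 : ℝ) * (∫ x in a..b, Real.sqrt |f' x|) ^ 2 := by
  obtain ⟨g', hg', hg'_cont, hint⟩ := V_complexity_excise_constant_interval_general
    (φ := fun t => Real.sqrt |t|) (by fun_prop) (by simp) hac hcd hdb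
    (fun x hx => (hderiv x hx).hasDerivWithinAt) hcont hconst hg₁ hg₂
  exact ⟨g', hg', hg'_cont, by rw [hint]⟩
end
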